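/- For any ε ∈ (0,1], any m ∈ ℕ, and any integer n with n ≥ 5m/ε, the complete bipartite graph K_{m,n} satisfies ST^(4)*(K_{m,n}) ≥ m + 1 − ε. -/

import Mathlib

/-!
Let every vertex of `X` be adjacent to every vertex of `Y`, let `D` be the number of operations
still owed to `X`, and let `r y` be the number still owed to `y ∈ Y`. Every operation at `X` lowers
the shield of every active `y` that is not saved, so `y` has to be saved `D - S y` times unless it
is removed early, which takes `r y` operations at `y`. Suppose that each operation saves at most `k`
vertices, and let `B` consist of the last `k + 1` vertices of `X` to be removed (or of all that are
left, if they are fewer). Backwards along a complete legal sequence,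
`∑ y ∈ Y, min (D - S y) (r y) ≤ k * D + ∑ b ∈ B, S b`
persists. An operation at `X` lowers the left side by at most `k`, and `D` by one. An operation at
`u ∈ Y` lowers it by at most one, and this is paid for by `∑ b ∈ B, S b` unless all of `B` is saved.
In that case `#B ≤ k`, so `B` is all that is left of `X`, and legality gives `D < S u + T u`: the
minimum at `u` is `D - S u`, before and after the operation.

With `k = 1` and constant shield `s` and target `t`, this reads
`#Y * min (#X * t - s) t ≤ #X * t + 2 * s`, which bounds `s / t` from below.
-/

open scoped Classical

noncomputable section

namespace StrictDeg

/-- The state of the `ShadeSave` process: the active vertex set (the vertex set of the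
current induced subgraph), the current shield, and the current target. -/
structure State (V : Type) where
  A : Finset V
  S : V → ℕ
  T : V → ℕ

variable {V : Type}

/-- The output of the operation `ShadeSave(G[A], S, T, u, W)`. -/
def applyStep (G : SimpleGraph V) (st : State V) (u : V) (W : Finset V) : State V where
  A := if st.T u = 1 then st.A.erase u else st.A
  S := fun v => if G.Adj u v ∧ v ∈ st.A ∧ v ∉ W then st.S v - 1 else st.S v
  T := fun v => if v = u ∧ 1 < st.T u then st.T u - 1 else st.T v

/-- Legality of the operation `ShadeSave(G[A], S, T, u, W)`:  `u` is a vertex of the current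
graph, `W` is a set of neighbors of `u` in the current graph,
`S u + T u > ∑_{w ∈ W} (S w + T w)`, and the output shield is nonnegative (in `ℕ` terms:
every neighbor of `u` in the current graph that is not saved has shield value at least 1). -/
def LegalStep (G : SimpleGraph V) (st : State V) (u : V) (W : Finset V) : Prop :=
  u ∈ st.A ∧
  (∀ w ∈ W, w ∈ st.A ∧ G.Adj u w) ∧
  (∑ w ∈ W, (st.S w + st.T w)) < st.S u + st.T u ∧
  (∀ v ∈ st.A, G.Adj u v → v ∉ W → 1 ≤ st.S v)

/-- `LegalSeq G st l` means `l` is a legal sequence of `ShadeSave` operations starting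
from the state `st`. -/
def LegalSeq (G : SimpleGraph V) : State V → List (V × Finset V) → Prop
  | _, [] => True
  | st, op :: rest => LegalStep G st op.1 op.2 ∧ LegalSeq G (applyStep G st op.1 op.2) rest

/-- The final state after applying the operations in `l` in order. -/
def finalState (G : SimpleGraph V) (st : State V) (l : List (V × Finset V)) : State V :=
  l.foldl (fun s op => applyStep G s op.1 op.2) st

/-- The induced subgraph of `G` on `A`, with shield `S` and target `T`, admits a complete
legal sequence, i.e. it is `ST⁽³⁾`-`(S,T)`-degenerate. -/
def ST3DegOn (G : SimpleGraph V) (A : Finset V) (S T : V → ℕ) : Prop :=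
  ∃ l : List (V × Finset V),
    LegalSeq G ⟨A, S, T⟩ l ∧ (finalState G ⟨A, S, T⟩ l).A = ∅

/-- The induced subgraph of `G` on `A`, with shield `S` and target `T`, admits a complete
restricted (every operation saves on at most one vertex) legal sequence, i.e. it is
`ST⁽⁴⁾`-`(S,T)`-degenerate. -/
def ST4DegOn (G : SimpleGraph V) (A : Finset V) (S T : V → ℕ) : Prop :=
  ∃ l : List (V × Finset V),
    LegalSeq G ⟨A, S, T⟩ l ∧ (∀ op ∈ l, op.2.card ≤ 1) ∧
      (finalState G ⟨A, S, T⟩ l).A = ∅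

/-- `G` is `ST⁽³⁾`-`(S,T)`-degenerate. -/
def ST3Deg [Fintype V] (G : SimpleGraph V) (S T : V → ℕ) : Prop :=
  ST3DegOn G Finset.univ S T

/-- `G` is `ST⁽⁴⁾`-`(S,T)`-degenerate. -/
def ST4Deg [Fintype V] (G : SimpleGraph V) (S T : V → ℕ) : Prop :=
  ST4DegOn G Finset.univ S T

/-- The fractional strict type-3 degeneracy
`ST⁽³⁾*(G) = inf {(s+t)/t : G is ST⁽³⁾-(s,t)-degenerate}`. -/
def ST3Star [Fintype V] (G : SimpleGraph V) : ℝ :=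
  sInf { x : ℝ | ∃ s t : ℕ, 1 ≤ t ∧ ST3Deg G (fun _ => s) (fun _ => t) ∧
    x = ((s : ℝ) + t) / t }

/-- The fractional strict type-4 degeneracy
`ST⁽⁴⁾*(G) = inf {(s+t)/t : G is ST⁽⁴⁾-(s,t)-degenerate}`. -/
def ST4Star [Fintype V] (G : SimpleGraph V) : ℝ :=
  sInf { x : ℝ | ∃ s t : ℕ, 1 ≤ t ∧ ST4Deg G (fun _ => s) (fun _ => t) ∧
    x = ((s : ℝ) + t) / t }

/-- A cover `𝓗 = (L, H)` of the graph `G`. -/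
structure Cover (G : SimpleGraph V) where
  /-- The vertex type of the cover graph `H`. -/
  U : Type
  fin : Fintype U
  /-- The cover graph. -/
  H : SimpleGraph U
  /-- The lists: `L v` is the part of the partition of `V(H)` corresponding to `v`. -/
  L : V → Finset U
  part : ∀ x : U, ∃! v : V, x ∈ L v
  indep : ∀ v : V, ∀ x ∈ L v, ∀ y ∈ L v, ¬ H.Adj x y
  cross : ∀ u v : V, ∀ x ∈ L u, ∀ y ∈ L v, H.Adj x y → G.Adj u v
  matching : ∀ u v : V, G.Adj u v → ∀ x ∈ L u, ∀ y ∈ L v, ∀ y' ∈ L v,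
      H.Adj x y → H.Adj x y' → y = y'

/-- `G` is `(𝓗, b)`-colorable: there is an independent set of the cover graph meeting
every list in at least `b` vertices. -/
def Cover.Colorable {G : SimpleGraph V} (C : Cover G) (b : ℕ) : Prop :=
  ∃ I : Finset C.U, (∀ x ∈ I, ∀ y ∈ I, ¬ C.H.Adj x y) ∧ ∀ v : V, b ≤ (I ∩ C.L v).card

/-- `G` is `(a,b)`-DP-colorable. -/
def DPColorable (G : SimpleGraph V) (a b : ℕ) : Prop :=
  ∀ C : Cover G, (∀ v : V, (C.L v).card = a) → C.Colorable b

/-- The fractional DP-chromatic number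
`χ*_DP(G) = inf {a/b : G is (a,b)-DP-colorable}`. -/
def DPStar (G : SimpleGraph V) : ℝ :=
  sInf { x : ℝ | ∃ a b : ℕ, 1 ≤ b ∧ b ≤ a ∧ DPColorable G a b ∧ x = (a : ℝ) / b }

/-- `G` is `(F₁, F₂)`-DP-colorable. -/
def DPColorableFn (G : SimpleGraph V) (F₁ F₂ : V → ℕ) : Prop :=
  ∀ C : Cover G, (∀ v : V, (C.L v).card = F₁ v) →
    ∃ I : Finset C.U, (∀ x ∈ I, ∀ y ∈ I, ¬ C.H.Adj x y) ∧
      ∀ v : V, (I ∩ C.L v).card = F₂ v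

open Finset

variable {G : SimpleGraph V} {st : State V} {u v : V} {W X Y : Finset V} {k : ℕ}

/-- The number of operations at `v` still needed to remove `v`. It is `0` once `v` has been
removed, whereas `st.T v` stays `1`. -/
def State.remaining (st : State V) (v : V) : ℕ :=
  if v ∈ st.A then st.T v else 0

/-- The number of operations at vertices of `X` still needed to remove all of `X`. -/
def State.remainingOn (st : State V) (X : Finset V) : ℕ :=
  ∑ x ∈ X, st.remaining x

/-- The number of operations still needed at `X` that the shield of `v` cannot absorb (truncated to
`0` if it absorbs all of them), capped by the number of operations still needed at `v`. -/
def State.deficit (st : State V) (X : Finset V) (v : V) : ℕ :=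
  min (st.remainingOn X - st.S v) (st.remaining v)

/-- The total deficit of `Y`, the potential function of the argument. -/
def State.potential (st : State V) (X Y : Finset V) : ℕ :=
  ∑ y ∈ Y, st.deficit X y

/-- The potential inequality, with `B` the last `k + 1` active vertices of `X` (or all, if there are
fewer) to be removed. It propagates backwards along complete legal sequences whose operations save
at most `k` vertices each. -/
def State.PotentialBound (st : State V) (k : ℕ) (X Y : Finset V) : Prop :=
  ∃ B ⊆ X ∩ st.A, #B = min (k + 1) #(X ∩ st.A) ∧
    st.potential X Y ≤ k * st.remainingOn X + ∑ b ∈ B, st.S b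

lemma applyStep_A_subset : (applyStep G st u W).A ⊆ st.A := by
  unfold applyStep
  split_ifs
  exacts [erase_subset _ _, subset_rfl]

lemma mem_applyStep_A_of_ne (h : v ≠ u) : v ∈ (applyStep G st u W).A ↔ v ∈ st.A := by
  unfold applyStep
  split_ifs <;> simp [h]

lemma applyStep_S_le (v : V) : (applyStep G st u W).S v ≤ st.S v := by
  simp only [applyStep]
  split_ifs <;> simp

lemma applyStep_S_of_mem (hv : v ∈ W) : (applyStep G st u W).S v = st.S v := by
  simp [applyStep, hv]

lemma applyStep_T_of_ne (h : v ≠ u) : (applyStep G st u W).T v = st.T v := by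
  simp [applyStep, h]

lemma applyStep_T_pos (h : 0 < st.T v) : 0 < (applyStep G st u W).T v := by
  simp only [applyStep]
  split_ifs <;> omega

lemma LegalStep.applyStep_S_add_one (h : LegalStep G st u W) (hv : v ∈ st.A) (huv : G.Adj u v)
    (hvW : v ∉ W) : (applyStep G st u W).S v + 1 = st.S v := by
  have hS : 1 ≤ st.S v := h.2.2.2 v hv huv hvW
  simp [applyStep, hv, huv, hvW, hS]

lemma remaining_of_mem (hv : v ∈ st.A) : st.remaining v = st.T v :=
  if_pos hv

lemma remaining_of_notMem (hv : v ∉ st.A) : st.remaining v = 0 :=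
  if_neg hv

lemma remaining_applyStep_self : (applyStep G st u W).remaining u = st.remaining u - 1 := by
  simp only [State.remaining, applyStep]
  split_ifs <;> grind

lemma remaining_applyStep_of_ne (h : v ≠ u) :
    (applyStep G st u W).remaining v = st.remaining v := by
  simp only [State.remaining, mem_applyStep_A_of_ne h, applyStep_T_of_ne h]

lemma remainingOn_applyStep_of_notMem (hu : u ∉ X) :
    (applyStep G st u W).remainingOn X = st.remainingOn X :=
  sum_congr rfl fun _ hx => remaining_applyStep_of_ne (ne_of_mem_of_not_mem hx hu)

lemma remainingOn_applyStep_add_of_mem (hu : u ∈ X) :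
    (applyStep G st u W).remainingOn X + min 1 (st.remaining u) = st.remainingOn X := by
  have hrest : (applyStep G st u W).remainingOn (X.erase u) = st.remainingOn (X.erase u) :=
    remainingOn_applyStep_of_notMem (notMem_erase u X)
  simp only [State.remainingOn] at hrest ⊢
  rw [← add_sum_erase _ _ hu, ← add_sum_erase _ _ hu, hrest, remaining_applyStep_self]
  omega

lemma remainingOn_le_applyStep_add_one :
    st.remainingOn X ≤ (applyStep G st u W).remainingOn X + 1 := by
  by_cases hu : u ∈ X
  · rw [← remainingOn_applyStep_add_of_mem hu]
    gcongr
    exact min_le_left _ _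
  · simp [remainingOn_applyStep_of_notMem hu]

lemma LegalStep.deficit_le_of_adj (h : LegalStep G st u W) (huv : G.Adj u v) :
    st.deficit X v ≤ (applyStep G st u W).deficit X v + if v ∈ W then 1 else 0 := by
  have hD : st.remainingOn X ≤ (applyStep G st u W).remainingOn X + 1 :=
    remainingOn_le_applyStep_add_one
  unfold State.deficit
  rw [remaining_applyStep_of_ne huv.ne']
  by_cases hvW : v ∈ W
  · rw [applyStep_S_of_mem hvW, if_pos hvW]
    omega
  by_cases hvA : v ∈ st.A
  · have hS := h.applyStep_S_add_one hvA huv hvW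
    omega
  · simp [remaining_of_notMem hvA]

lemma LegalStep.potential_le_add_card (h : LegalStep G st u W) (hadj : ∀ y ∈ Y, G.Adj u y) :
    st.potential X Y ≤ (applyStep G st u W).potential X Y + #W :=
  calc st.potential X Y
      ≤ ∑ y ∈ Y, ((applyStep G st u W).deficit X y + if y ∈ W then 1 else 0) :=
        sum_le_sum fun y hy => h.deficit_le_of_adj (hadj y hy)
    _ = (applyStep G st u W).potential X Y + #(Y ∩ W) := by
        simp [sum_add_distrib, State.potential]
    _ ≤ (applyStep G st u W).potential X Y + #W := by
        gcongr
        exact inter_subset_right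

lemma deficit_le_of_ne (hu : u ∉ X) (h : v ≠ u) :
    st.deficit X v ≤ (applyStep G st u W).deficit X v := by
  unfold State.deficit
  rw [remaining_applyStep_of_ne h, remainingOn_applyStep_of_notMem hu]
  gcongr
  exact applyStep_S_le v

lemma deficit_self_le_add_one (hu : u ∉ X) :
    st.deficit X u ≤ (applyStep G st u W).deficit X u + 1 := by
  unfold State.deficit
  rw [remaining_applyStep_self, remainingOn_applyStep_of_notMem hu]
  have hS : (applyStep G st u W).S u ≤ st.S u := applyStep_S_le u
  omega

lemma LegalStep.deficit_self_le (h : LegalStep G st u W) (hu : u ∉ X)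
    (hlt : st.remainingOn X < st.S u + st.T u) :
    st.deficit X u ≤ (applyStep G st u W).deficit X u := by
  unfold State.deficit
  rw [remaining_applyStep_self, remainingOn_applyStep_of_notMem hu, remaining_of_mem h.1]
  have hS : (applyStep G st u W).S u ≤ st.S u := applyStep_S_le u
  omega

lemma potential_le_add_one (hu : u ∉ X) :
    st.potential X Y ≤ (applyStep G st u W).potential X Y + 1 :=
  calc st.potential X Y
      ≤ ∑ y ∈ Y, ((applyStep G st u W).deficit X y + if y = u then 1 else 0) := by
        refine sum_le_sum fun y _ => ?_
        split_ifs with hy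
        · subst hy
          exact deficit_self_le_add_one hu
        · exact deficit_le_of_ne hu hy
    _ = (applyStep G st u W).potential X Y + if u ∈ Y then 1 else 0 := by
        rw [sum_add_distrib, sum_ite_eq', State.potential]
    _ ≤ (applyStep G st u W).potential X Y + 1 := by
        gcongr
        split_ifs <;> simp

lemma LegalStep.potential_le (h : LegalStep G st u W) (hu : u ∉ X)
    (hlt : u ∈ Y → st.remainingOn X < st.S u + st.T u) :
    st.potential X Y ≤ (applyStep G st u W).potential X Y := by
  refine sum_le_sum fun y hy => ?_
  rcases eq_or_ne y u with rfl | hyu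
  · exact h.deficit_self_le hu (hlt hy)
  · exact deficit_le_of_ne hu hyu

lemma sum_applyStep_S_le (B : Finset V) :
    ∑ b ∈ B, (applyStep G st u W).S b ≤ ∑ b ∈ B, st.S b :=
  sum_le_sum fun b _ => applyStep_S_le b

lemma LegalStep.sum_applyStep_S_lt (h : LegalStep G st u W) {B : Finset V} (hBA : B ⊆ st.A)
    (hadj : ∀ b ∈ B, G.Adj u b) (hBW : ¬ B ⊆ W) :
    ∑ b ∈ B, (applyStep G st u W).S b < ∑ b ∈ B, st.S b := by
  obtain ⟨b, hb, hbW⟩ := not_subset.mp hBW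
  have hS := h.applyStep_S_add_one (hBA hb) (hadj b hb) hbW
  exact sum_lt_sum (fun b _ => applyStep_S_le b) ⟨b, hb, by omega⟩

lemma LegalStep.remainingOn_lt (h : LegalStep G st u W) (hXW : X ∩ st.A ⊆ W) :
    st.remainingOn X < st.S u + st.T u :=
  calc st.remainingOn X
      = ∑ x ∈ X ∩ st.A, st.T x := (sum_ite_mem _ _ _)
    _ ≤ ∑ w ∈ W, st.T w := sum_le_sum_of_subset hXW
    _ ≤ ∑ w ∈ W, (st.S w + st.T w) := sum_le_sum fun _ _ => Nat.le_add_left _ _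
    _ < st.S u + st.T u := h.2.2.1

lemma LegalStep.potentialBound_of_mem (h : LegalStep G st u W) (hadj : ∀ y ∈ Y, G.Adj u y)
    (hu : u ∈ X) (hT : 0 < st.T u) (hW : #W ≤ k)
    (hbound : (applyStep G st u W).PotentialBound k X Y) : st.PotentialBound k X Y := by
  obtain ⟨B', hB'sub, hB'card, hpot⟩ := hbound
  have hsub : X ∩ (applyStep G st u W).A ⊆ X ∩ st.A := inter_subset_inter_left applyStep_A_subset
  -- If `u` is removed, then `B'` may lack one of the last `k + 1` vertices of `X`.
  obtain ⟨B, hB'B, hBsub, hBcard⟩ := exists_subsuperset_card_eq (hB'sub.trans hsub)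
    (n := min (k + 1) #(X ∩ st.A)) (by have := card_le_card hsub; omega) (min_le_right _ _)
  refine ⟨B, hBsub, hBcard, ?_⟩
  have hD : (applyStep G st u W).remainingOn X + 1 = st.remainingOn X := by
    rw [← remainingOn_applyStep_add_of_mem (st := st) hu, remaining_of_mem h.1, min_eq_left hT]
  calc st.potential X Y
      ≤ (applyStep G st u W).potential X Y + k := (h.potential_le_add_card hadj).trans (by gcongr)
    _ ≤ k * (applyStep G st u W).remainingOn X + ∑ b ∈ B', (applyStep G st u W).S b + k := by
        gcongr
    _ = k * st.remainingOn X + ∑ b ∈ B', (applyStep G st u W).S b := by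
        rw [← hD]
        ring
    _ ≤ k * st.remainingOn X + ∑ b ∈ B, st.S b := by
        gcongr
        exact (sum_applyStep_S_le B').trans (sum_le_sum_of_subset hB'B)

lemma LegalStep.potentialBound_of_notMem (h : LegalStep G st u W)
    (hadj : u ∈ Y → ∀ x ∈ X, G.Adj u x) (hu : u ∉ X) (hW : #W ≤ k)
    (hbound : (applyStep G st u W).PotentialBound k X Y) : st.PotentialBound k X Y := by
  obtain ⟨B, hBsub, hBcard, hpot⟩ := hbound
  have hactive : X ∩ (applyStep G st u W).A = X ∩ st.A := by
    ext x
    simp only [mem_inter]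
    exact and_congr_right fun hx => mem_applyStep_A_of_ne (ne_of_mem_of_not_mem hx hu)
  rw [hactive] at hBsub hBcard
  rw [remainingOn_applyStep_of_notMem hu] at hpot
  refine ⟨B, hBsub, hBcard, ?_⟩
  by_cases hlt : u ∈ Y → st.remainingOn X < st.S u + st.T u
  · have hpot_step := h.potential_le hu hlt
    have hS : ∑ b ∈ B, (applyStep G st u W).S b ≤ ∑ b ∈ B, st.S b := sum_applyStep_S_le B
    omega
  · have huY : u ∈ Y := (Classical.not_imp.mp hlt).1
    have hBW : ¬ B ⊆ W := by
      intro hBW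
      have hcard : #B ≤ k := (card_le_card hBW).trans hW
      have hB : B = X ∩ st.A := eq_of_subset_of_card_le hBsub (by omega)
      exact hlt fun _ => h.remainingOn_lt (hB ▸ hBW)
    have hpot_step : st.potential X Y ≤ (applyStep G st u W).potential X Y + 1 :=
      potential_le_add_one hu
    have hS := h.sum_applyStep_S_lt (hBsub.trans inter_subset_right)
      (fun b hb => hadj huY b (mem_of_mem_inter_left (hBsub hb))) hBW
    omega

theorem LegalSeq.potentialBound (hXY : G.IsCompleteBetween X Y) {l : List (V × Finset V)}
    (hl : LegalSeq G st l) (hcard : ∀ op ∈ l, #op.2 ≤ k) (hT : ∀ x ∈ X, 0 < st.T x)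
    (hcomplete : (finalState G st l).A = ∅) : st.PotentialBound k X Y := by
  induction l generalizing st with
  | nil =>
    have hA : st.A = ∅ := hcomplete
    exact ⟨∅, empty_subset _, by simp [hA],
      by simp [State.potential, State.deficit, State.remaining, hA]⟩
  | cons op rest ih =>
    obtain ⟨u, W⟩ := op
    obtain ⟨hstep, hrest⟩ := hl
    obtain ⟨hW, hcard⟩ := List.forall_mem_cons.mp hcard
    have hbound := ih hrest hcard (fun x hx => applyStep_T_pos (hT x hx)) hcomplete
    by_cases hu : u ∈ X
    · exact hstep.potentialBound_of_mem (fun y hy => hXY hu hy) hu (hT u hu) hW hbound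
    · exact hstep.potentialBound_of_notMem (fun huY x hx => (hXY hx huY).symm) hu hW hbound

lemma ST4DegOn.of_applyStep (h : LegalStep G st u W) (hW : #W ≤ 1)
    (hnext : ST4DegOn G (applyStep G st u W).A (applyStep G st u W).S (applyStep G st u W).T) :
    ST4DegOn G st.A st.S st.T := by
  obtain ⟨l, hl, hcard, hcomplete⟩ := hnext
  exact ⟨(u, W) :: l, ⟨h, hl⟩, List.forall_mem_cons.mpr ⟨hW, hcard⟩, hcomplete⟩

lemma st4DegOn_of_card_le {A : Finset V} {S T : V → ℕ} (hT : ∀ v ∈ A, T v = 1)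
    (hS : ∀ v ∈ A, #A ≤ S v + 1) : ST4DegOn G A S T := by
  induction A using Finset.induction_on generalizing S T with
  | empty => exact ⟨[], trivial, by simp, rfl⟩
  | insert u A hu ih =>
    rw [card_insert_of_notMem hu] at hS
    have hTu : T u = 1 := hT u (mem_insert_self u A)
    have hlegal : LegalStep G ⟨insert u A, S, T⟩ u ∅ := by
      refine ⟨mem_insert_self u A, by simp, by simp [hTu], fun v hv huv _ => ?_⟩
      have hvA : v ∈ A := mem_of_mem_insert_of_ne hv huv.ne'
      have hpos : 0 < #A := card_pos.mpr ⟨v, hvA⟩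
      have hSv := hS v hv
      dsimp only
      omega
    refine ST4DegOn.of_applyStep hlegal (by simp) ?_
    have hA : (applyStep G ⟨insert u A, S, T⟩ u ∅).A = A := by simp [applyStep, hTu, hu]
    rw [hA]
    refine ih (fun v hv => ?_) (fun v hv => ?_)
    · rw [applyStep_T_of_ne (ne_of_mem_of_not_mem hv hu)]
      exact hT v (mem_insert_of_mem hv)
    · have hSv := hS v (mem_insert_of_mem hv)
      simp only [applyStep]
      split_ifs <;> omega

lemma ST4Deg.card_mul_min_le [Fintype V] {s t : ℕ} (h : ST4Deg G (fun _ => s) (fun _ => t))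
    (hXY : G.IsCompleteBetween X Y) (ht : 1 ≤ t) :
    #Y * min (#X * t - s) t ≤ #X * t + 2 * s := by
  obtain ⟨l, hl, hcard, hcomplete⟩ := h
  obtain ⟨B, -, hBcard, hpot⟩ := hl.potentialBound hXY hcard (fun _ _ => ht) hcomplete
  have hB : #B ≤ 2 := by omega
  simp only [State.potential, State.deficit, State.remainingOn, State.remaining, mem_univ,
    if_true, sum_const, smul_eq_mul, one_mul] at hpot
  exact hpot.trans (by gcongr)

lemma ST4Deg.mul_target_le_shield_add_target [Fintype V] {s t : ℕ}
    (h : ST4Deg G (fun _ => s) (fun _ => t)) (hXY : G.IsCompleteBetween X Y) (ht : 1 ≤ t)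
    {ε : ℝ} (hε1 : ε ≤ 1) (hε : 3 * (#X : ℝ) ≤ ε * (#Y + 2)) : (#X + 1 - ε) * t ≤ (s : ℝ) + t := by
  by_contra! hlt
  have hmin : ε * t ≤ ((min (#X * t - s) t : ℕ) : ℝ) := by
    have hsub : (#X * t : ℝ) ≤ (#X * t - s : ℕ) + s := by exact_mod_cast le_tsub_add
    rw [Nat.cast_min]
    exact le_min (by linarith) (mul_le_of_le_one_left t.cast_nonneg hε1)
  have hbound : (#Y : ℝ) * (min (#X * t - s) t : ℕ) ≤ #X * t + 2 * s := by
    exact_mod_cast h.card_mul_min_le hXY ht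
  have hcontra : ε * (#Y + 2) * t < 3 * #X * t := by
    calc ε * (#Y + 2) * t = #Y * (ε * t) + 2 * (ε * t) := by ring
      _ ≤ #Y * (min (#X * t - s) t : ℕ) + 2 * (ε * t) := by gcongr
      _ ≤ #X * t + 2 * s + 2 * (ε * t) := by gcongr
      _ < 3 * #X * t := by linarith
  exact hcontra.not_ge (by gcongr)

theorem st4Star_completeBipartite_lowerBound_general [Fintype V]
    (hXY : G.IsCompleteBetween X Y) {ε : ℝ} (hε1 : ε ≤ 1) (hε : 3 * (#X : ℝ) ≤ ε * (#Y + 2)) :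
    (#X : ℝ) + 1 - ε ≤ ST4Star G := by
  -- Some pair must be admissible, since `sInf ∅ = 0`.
  have hdeg : ST4Deg G (fun _ => Fintype.card V) (fun _ => 1) :=
    st4DegOn_of_card_le (fun _ _ => rfl) (fun _ _ => Nat.le_succ _)
  refine le_csInf ⟨_, _, 1, le_rfl, hdeg, rfl⟩ ?_
  rintro _ ⟨s, t, ht, h, rfl⟩
  rw [le_div_iff₀ (by exact_mod_cast ht)]
  exact h.mul_target_le_shield_add_target hXY ht hε1 hε

lemma isCompleteBetween_completeBipartiteGraph (α β : Type) [Fintype α] [Fintype β] :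
    (completeBipartiteGraph α β).IsCompleteBetween (univ.map .inl : Finset (α ⊕ β))
      (univ.map .inr : Finset (α ⊕ β)) := by
  simp [SimpleGraph.IsCompleteBetween]

/-- For any `ε ∈ (0,1]`, any `m ∈ ℕ` (so `m ≥ 1`), and any integer `n` with
`n ≥ 5m/ε`, the complete bipartite graph `K_{m,n}` satisfies `ST⁽⁴⁾*(K_{m,n}) ≥ m + 1 − ε`. -/
theorem st4Star_completeBipartite_lowerBound (ε : ℝ) (hε0 : 0 < ε) (hε1 : ε ≤ 1)
    (m : ℕ) (hm : 1 ≤ m) (n : ℕ) (hn : 5 * (m : ℝ) / ε ≤ (n : ℝ)) :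
    (m : ℝ) + 1 - ε ≤ ST4Star (completeBipartiteGraph (Fin m) (Fin n)) := by
  have hε : 3 * (m : ℝ) ≤ ε * (n + 2) := by rw [div_le_iff₀ hε0] at hn; nlinarith
  simpa using st4Star_completeBipartite_lowerBound_general
    (isCompleteBetween_completeBipartiteGraph (Fin m) (Fin n)) hε1 (by simpa using hε)

end StrictDeg
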